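/- Let γ ≥ 0 and let f be a normalized close-to-convex function on U. Then the function F(z) = ((1+γ)/z^γ) ∫_0^z t^{γ-1} f(t) dt is also close-to-convex on U. -/

import Mathlib

open Complex MeasureTheory

noncomputable section

def unitDisk : Set ℂ := Metric.ball 0 1

def Normalized (f : ℂ → ℂ) : Prop := f 0 = 0 ∧ deriv f 0 = 1

def StarlikeOfOrder (a : ℝ) (g : ℂ → ℂ) : Prop :=
  ∀ z ∈ unitDisk, z ≠ 0 → a < (z * deriv g z / g z).re

def Starlike (g : ℂ → ℂ) : Prop := StarlikeOfOrder 0 g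

def CloseToConvex (f : ℂ → ℂ) : Prop :=
  AnalyticOn ℂ f unitDisk ∧ Normalized f ∧
  ∃ g : ℂ → ℂ, AnalyticOn ℂ g unitDisk ∧ Normalized g ∧ Set.InjOn g unitDisk ∧
    Starlike g ∧ ∀ z ∈ unitDisk, z ≠ 0 → 0 < (z * deriv f z / g z).re

def Subordinate (f g : ℂ → ℂ) : Prop :=
  ∃ w : ℂ → ℂ, AnalyticOn ℂ w unitDisk ∧ w 0 = 0 ∧
    (∀ z ∈ unitDisk, w z ∈ unitDisk) ∧ ∀ z ∈ unitDisk, f z = g (w z)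

def eps (k : ℕ) : ℂ := Complex.exp (2 * Real.pi * Complex.I / k)

def gk (k : ℕ) (g : ℂ → ℂ) (z : ℂ) : ℂ :=
  ∏ v ∈ Finset.range k, (eps k) ^ (-(v : ℤ)) * g ((eps k) ^ v * z)

def Ks (k : ℕ) (l m : ℝ) (φ : ℂ → ℂ) (f : ℂ → ℂ) : Prop :=
  ∃ g : ℂ → ℂ, AnalyticOn ℂ g unitDisk ∧ Normalized g ∧
    StarlikeOfOrder ((k - 1 : ℝ) / k) g ∧
    Subordinate (fun z => (z ^ k * deriv f z
      + z ^ (k + 1) * iteratedDeriv 2 f z * ((l : ℂ) - m + 2 * l * m)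
      + (l : ℂ) * m * z ^ (k + 2) * iteratedDeriv 3 f z) / gk k g z) φ

/-!
Write `g(z) = z χ(z)` for the starlike function attached to `f`, put
`J φ (z) = ∫₀¹ s ^ γ φ(s z) ds`, and let `F`, `G` be the Bernardi transforms of `f`, `g`. Then
`z F' / G = J f' / J χ`, and `J` inverts a differential operator: `z (J φ)' + (1 + γ) J φ = φ`.

Hence `w = J χ / χ` satisfies `z w' + (γ + z g' / g) w = 1`, and `p = J M / J χ` satisfies
`p + z p' w = M / χ` for every `M`. At a point of smallest modulus where a holomorphic function
meets the boundary of a region, its radial derivative, if nonzero, is an outward normal. Applied to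
`w` and the region `Re w > Re γ |w| ^ 2`, this shows that `w` never leaves that region; applied to
`p` and the right half-plane, it then shows that `Re p > 0` as soon as `Re (M / χ) > 0`. The choice
`M = f'` is close-to-convexity of `F` with respect to `G`, and `M = g'` is starlikeness of `G`.
Finally `G` is univalent because `s ↦ log G(exp s)` has derivative `z G' / G` at `z = exp s`, hence
is injective on the left half-plane by the Noshiro–Warschawski criterion.
-/

section BoundaryContact

open Metric

theorem exists_isMinOn_closedBall_of_nonpos {E : Type*} [NormedAddCommGroup E] [NormedSpace ℝ E]
    [ProperSpace E] {h : E → ℝ} {R : ℝ} (hh : ContinuousOn h (ball 0 R)) (h0 : 0 < h 0)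
    (hex : ∃ z ∈ ball 0 R, h z ≤ 0) :
    ∃ z ∈ ball 0 R, h z = 0 ∧ IsMinOn h (closedBall 0 ‖z‖) z := by
  obtain ⟨y, hyR, hy⟩ := hex
  have hsub : closedBall (0 : E) ‖y‖ ⊆ ball 0 R := closedBall_subset_ball (by simpa using hyR)
  obtain ⟨z, ⟨hzy, hz⟩, hmin⟩ :=
    ((isCompact_closedBall (0 : E) ‖y‖).of_isClosed_subset
      ((hh.mono hsub).preimage_isClosed_of_isClosed isClosed_closedBall isClosed_Iic)
      Set.inter_subset_left).exists_isMinOn ⟨y, by simp, hy⟩ continuous_norm.continuousOn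
  have hz0 : z ≠ 0 := by
    rintro rfl
    exact hz.not_gt h0
  have hzsub : closedBall (0 : E) ‖z‖ ⊆ closedBall 0 ‖y‖ :=
    closedBall_subset_closedBall (by simpa using hzy)
  have pos_inside : ∀ x ∈ ball (0 : E) ‖z‖, 0 < h x := by
    intro x hx
    by_contra! hle
    have : ‖z‖ ≤ ‖x‖ := hmin ⟨hzsub (ball_subset_closedBall hx), hle⟩
    exact this.not_gt (by simpa using hx)
  have nonneg : Set.MapsTo h (closedBall 0 ‖z‖) (Set.Ici 0) := by
    have hmaps : Set.MapsTo h (ball 0 ‖z‖) (Set.Ici 0) := fun x hx => (pos_inside x hx).le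
    rw [← closure_ball 0 (norm_ne_zero_iff.mpr hz0)] at hzsub ⊢
    simpa using hmaps.closure_of_continuousOn (hh.mono (hzsub.trans hsub))
  have hhz : h z = 0 := le_antisymm hz (nonneg (by simp))
  exact ⟨z, hsub hzy, hhz, fun x hx => hhz.trans_le (nonneg hx)⟩

theorem hasFDerivAt_apply_self_nonpos_of_isMinOn_closedBall {E : Type*} [NormedAddCommGroup E]
    [NormedSpace ℝ E] {h : E → ℝ} {h' : E →L[ℝ] ℝ} {z : E} (hd : HasFDerivAt h h' z)
    (hmin : IsMinOn h (closedBall 0 ‖z‖) z) : h' z ≤ 0 := by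
  have hseg : segment ℝ z 0 ⊆ closedBall 0 ‖z‖ :=
    (convex_closedBall 0 ‖z‖).segment_subset (by simp) (by simp)
  simpa using hmin.localize.hasFDerivWithinAt_nonneg hd.hasFDerivWithinAt
    (sub_mem_posTangentConeAt_of_segment_subset hseg)

theorem hasFDerivAt_apply_mul_I_eq_zero_of_isMinOn_closedBall {h : ℂ → ℝ} {h' : ℂ →L[ℝ] ℝ} {z : ℂ}
    (hd : HasFDerivAt h h' z) (hmin : IsMinOn h (closedBall 0 ‖z‖) z) : h' (z * I) = 0 := by
  have hcircle : HasDerivAt (fun t : ℝ => z * exp (t * I)) (z * I) 0 := by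
    simpa using
      ((((hasDerivAt_id (0 : ℝ)).ofReal_comp).mul_const I).cexp).const_mul z
  have hcomp : HasDerivAt (fun t : ℝ => h (z * exp (t * I))) (h' (z * I)) 0 :=
    HasFDerivAt.comp_hasDerivAt 0 (by simpa using hd) hcircle
  refine IsLocalMin.hasDerivAt_eq_zero (.of_forall fun t => ?_) hcomp
  simpa using hmin (show z * exp (t * I) ∈ closedBall 0 ‖z‖ by simp [norm_exp])

-- `z * deriv v z` and `z * deriv v z * I` are the radial and the tangential derivative of `v` at a
-- point of smallest modulus which `v` maps to the boundary of `{ρ > 0}`.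
theorem exists_boundary_contact {v : ℂ → ℂ} {ρ : ℂ → ℝ} {ρ' : ℂ → ℂ →L[ℝ] ℝ} {R : ℝ}
    (hv : DifferentiableOn ℂ v (ball 0 R)) (hρ : ∀ x, HasFDerivAt ρ (ρ' x) x) (h0 : 0 < ρ (v 0))
    (hex : ∃ z ∈ ball 0 R, ρ (v z) ≤ 0) :
    ∃ z ∈ ball 0 R, ρ (v z) = 0 ∧ ρ' (v z) (z * deriv v z) ≤ 0 ∧
      ρ' (v z) (z * deriv v z * I) = 0 := by
  have hρc : Continuous ρ := continuous_iff_continuousAt.mpr fun x => (hρ x).continuousAt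
  obtain ⟨z, hz, hzero, hmin⟩ := exists_isMinOn_closedBall_of_nonpos
    (hρc.comp_continuousOn hv.continuousOn) h0 hex
  have hvz : HasDerivAt v (deriv v z) z :=
    (hv.differentiableAt (isOpen_ball.mem_nhds hz)).hasDerivAt
  have hd : HasFDerivAt (ρ ∘ v) ((ρ' (v z)).comp (deriv v z • (1 : ℂ →L[ℝ] ℂ))) z :=
    (hρ (v z)).comp z hvz.complexToReal_fderiv
  have radial := hasFDerivAt_apply_self_nonpos_of_isMinOn_closedBall hd hmin
  have tangential := hasFDerivAt_apply_mul_I_eq_zero_of_isMinOn_closedBall hd hmin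
  refine ⟨z, hz, hzero, ?_, ?_⟩
  · simpa [mul_comm] using radial
  · simpa [mul_comm, mul_assoc, mul_left_comm] using tangential

end BoundaryContact

section DifferentialSubordination

open Metric

theorem re_pos_of_re_add_mul_deriv_pos {p w : ℂ → ℂ} {R : ℝ}
    (hp : DifferentiableOn ℂ p (ball 0 R))
    (hw : ∀ z ∈ ball 0 R, 0 ≤ (w z).re)
    (hpos : ∀ z ∈ ball 0 R, 0 < (p z + z * deriv p z * w z).re) :
    ∀ z ∈ ball 0 R, 0 < (p z).re := by
  by_contra! hex
  have h0 : 0 < (p 0).re := by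
    obtain ⟨x, hx, -⟩ := hex
    simpa using hpos 0 (mem_ball_self (pos_of_mem_ball hx))
  obtain ⟨z, hz, hre, hle, him⟩ :=
    exists_boundary_contact hp (fun x => reCLM.hasFDerivAt) h0 hex
  simp only [reCLM_apply, mul_I_re, neg_eq_zero] at hre hle him
  have hcontact : (p z + z * deriv p z * w z).re = (z * deriv p z).re * (w z).re := by
    rw [add_re, mul_re _ (w z), hre, him]
    ring
  exact (hpos z hz).not_ge (hcontact ▸ mul_nonpos_of_nonpos_of_nonneg hle (hw z hz))

-- The hypotheses make `d` a nonpositive multiple of the gradient `1 - 2 m v` of `Re v - m ‖v‖ ^ 2`,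
-- and the inner product of that gradient with `v` is `-Re v`.
theorem inner_nonneg_of_re_eq_mul_sq_norm {v d : ℂ} {m : ℝ} (hm : 0 ≤ m)
    (hv : v.re = m * ‖v‖ ^ 2) (hle : d.re - m * (2 * inner ℝ v d) ≤ 0)
    (htan : (d * I).re - m * (2 * inner ℝ v (d * I)) = 0) : 0 ≤ inner ℝ v d := by
  have hre : 0 ≤ v.re := hv ▸ by positivity
  rw [← normSq_eq_norm_sq, normSq_apply] at hv
  simp only [Complex.inner, mul_re, mul_im, conj_re, conj_im, I_re, I_im] at hle htan ⊢
  have key : d.re * v.re - d.im * -v.im =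
      v.re * -(d.re - m * (2 * (d.re * v.re - d.im * -v.im))) := by
    linear_combination 2 * d.re * hv - v.im * htan
  exact key ▸ mul_nonneg hre (neg_nonneg.mpr hle)

theorem inner_eq_re_sub_of_add_mul_eq_one {v d k : ℂ} (h : d + k * v = 1) :
    inner ℝ v d = v.re - k.re * ‖v‖ ^ 2 := by
  have : d * starRingEnd ℂ v = starRingEnd ℂ v - (‖v‖ ^ 2 : ℝ) * k := by
    rw [← normSq_eq_norm_sq, normSq_eq_conj_mul_self]
    linear_combination starRingEnd ℂ v * h
  rw [Complex.inner, this, sub_re, conj_re, re_ofReal_mul, mul_comm]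

theorem mul_sq_norm_lt_re_of_mul_deriv_add_eq_one {w q : ℂ → ℂ} {c : ℂ} {R : ℝ}
    (hc : 0 ≤ c.re) (hw : DifferentiableOn ℂ w (ball 0 R)) (hq : ∀ z ∈ ball 0 R, 0 < (q z).re)
    (hode : ∀ z ∈ ball 0 R, z * deriv w z + (c + q z) * w z = 1) :
    ∀ z ∈ ball 0 R, c.re * ‖w z‖ ^ 2 < (w z).re := by
  have of_zero : ∀ z ∈ ball 0 R, w z = 0 → z * deriv w z = 1 := fun z hz h => by
    simpa [h] using hode z hz
  have hinner : ∀ z ∈ ball 0 R, inner ℝ (w z) (z * deriv w z) =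
      (w z).re - (c.re + (q z).re) * ‖w z‖ ^ 2 := fun z hz =>
    inner_eq_re_sub_of_add_mul_eq_one (hode z hz)
  by_contra! hex
  have h0 : 0 < (w 0).re - c.re * ‖w 0‖ ^ 2 := by
    obtain ⟨x, hx, -⟩ := hex
    have hmem : (0 : ℂ) ∈ ball 0 R := mem_ball_self (pos_of_mem_ball hx)
    have hne : w 0 ≠ 0 := fun h => by simpa using of_zero 0 hmem h
    have hqw : 0 < (q 0).re * ‖w 0‖ ^ 2 := mul_pos (hq 0 hmem) (by positivity)
    have := hinner 0 hmem
    rw [zero_mul, inner_zero_right] at this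
    linarith
  obtain ⟨z, hz, hρ, hle, htan⟩ :=
    exists_boundary_contact (ρ := fun x => x.re - c.re * ‖x‖ ^ 2) hw
      (fun x => reCLM.hasFDerivAt.sub ((hasStrictFDerivAt_norm_sq x).hasFDerivAt.const_mul c.re))
      h0 (by simpa only [sub_nonpos] using hex)
  simp only [sub_apply, smul_apply, reCLM_apply,
    innerSL_apply_apply, smul_eq_mul, nsmul_eq_mul, Nat.cast_ofNat] at hle htan
  have hnonneg := inner_nonneg_of_re_eq_mul_sq_norm hc (sub_eq_zero.mp hρ) hle htan
  have hne : w z ≠ 0 := fun h => by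
    rw [of_zero z hz h, h, inner_zero_left, one_re] at hle
    norm_num at hle
  have hqw : 0 < (q z).re * ‖w z‖ ^ 2 := mul_pos (hq z hz) (by positivity)
  linarith [hinner z hz]

end DifferentialSubordination

section NoshiroWarschawski

theorem injOn_of_convex_of_hasDerivAt_re_pos {f f' : ℂ → ℂ} {s : Set ℂ} (hs : Convex ℝ s)
    (hf : ∀ z ∈ s, HasDerivAt f (f' z) z) (hpos : ∀ z ∈ s, 0 < (f' z).re) : Set.InjOn f s := by
  intro a ha b hb hab
  by_contra hne
  have hpath : ∀ t ∈ Set.Icc (0 : ℝ) 1, HasDerivAt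
      (fun t : ℝ => (starRingEnd ℂ (b - a) * f (AffineMap.lineMap a b t)).re)
      (‖b - a‖ ^ 2 * (f' (AffineMap.lineMap a b t)).re) t := by
    intro t ht
    have hline : HasDerivAt (fun t : ℝ => AffineMap.lineMap a b t) (b - a) t :=
      AffineMap.hasDerivAt_lineMap
    have hmem : AffineMap.lineMap a b t ∈ s := hs.lineMap_mem ha hb ht
    have := reCLM.hasFDerivAt.comp_hasDerivAt t
      (((hf _ hmem).comp t hline).const_mul (starRingEnd ℂ (b - a)))
    refine this.congr_deriv ?_
    rw [reCLM_apply, mul_comm (f' _), ← mul_assoc, ← normSq_eq_conj_mul_self,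
      re_ofReal_mul, normSq_eq_norm_sq]
  have hmono := strictMonoOn_of_hasDerivWithinAt_pos (convex_Icc (0 : ℝ) 1)
    (fun t ht => (hpath t ht).continuousAt.continuousWithinAt)
    (fun t ht => (hpath t (interior_subset ht)).hasDerivWithinAt)
    (fun t ht => mul_pos (by have := sub_ne_zero.mpr (Ne.symm hne); positivity)
      (hpos _ (hs.lineMap_mem ha hb (interior_subset ht))))
  have := hmono (by simp) (by simp) zero_lt_one
  simp [hab] at this

theorem exists_hasDerivAt_logDeriv_exp_eq {χ : ℂ → ℂ} {c : ℂ} {r : ℝ}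
    (hχ : DifferentiableOn ℂ χ (Metric.ball c r)) (hne : ∀ z ∈ Metric.ball c r, χ z ≠ 0) :
    ∃ Φ : ℂ → ℂ, ∀ z ∈ Metric.ball c r, HasDerivAt Φ (logDeriv χ z) z ∧ exp (Φ z) = χ z := by
  have hlog : DifferentiableOn ℂ (logDeriv χ) (Metric.ball c r) :=
    (hχ.deriv Metric.isOpen_ball).div hχ hne
  obtain ⟨Φ, hΦc, hΦ⟩ := hlog.isExactOn_ball.with_val_at c (log (χ c))
  have hexp : ∀ z ∈ Metric.ball c r, HasDerivAt (fun z => exp (Φ z)) (exp (Φ z) * logDeriv χ z) z :=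
    fun z hz => (hΦ z hz).cexp
  obtain ⟨k, -, hk⟩ := (logDeriv_eqOn_iff (f := fun z => exp (Φ z))
    (fun z hz => (hexp z hz).differentiableAt.differentiableWithinAt) hχ Metric.isOpen_ball
    (convex_ball c r).isPreconnected hne fun z _ => exp_ne_zero _).mp fun z hz => by
      rw [logDeriv_apply, (hexp z hz).deriv, mul_div_cancel_left₀ _ (exp_ne_zero _)]
  refine ⟨Φ, fun z hz => ⟨hΦ z hz, ?_⟩⟩
  have hcmem : c ∈ Metric.ball c r := Metric.mem_ball_self (Metric.pos_of_mem_ball hz)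
  have hk1 : k = 1 := by
    have := hk hcmem
    simpa [hΦc, exp_log (hne c hcmem), hne c hcmem] using this.symm
  simpa [hk1] using hk hz

end NoshiroWarschawski

section RadialMean

open Metric

/-- The weighted radial mean `∫₀¹ s ^ γ φ (s z) ds`, in terms of which both the Bernardi transform
and its derivative are expressed. -/
def radialMean (γ : ℂ) (φ : ℂ → ℂ) (z : ℂ) : ℂ := ∫ s in (0 : ℝ)..1, (s : ℂ) ^ γ * φ (s * z)

variable {γ : ℂ} {φ f : ℂ → ℂ} {R : ℝ} {z : ℂ}

theorem ofReal_mul_mem_ball {s : ℝ} (hs : s ∈ Set.Icc 0 1) (hz : z ∈ ball 0 R) :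
    (s : ℂ) * z ∈ ball 0 R :=
  (balanced_ball_zero (𝕜 := ℂ)).smul_mem (by simpa [abs_of_nonneg hs.1] using hs.2) hz

theorem norm_ofReal_cpow_le_one {s : ℝ} (hs : s ∈ Set.Ioc 0 1) (hγ : 0 ≤ γ.re) :
    ‖(s : ℂ) ^ γ‖ ≤ 1 :=
  (norm_cpow_eq_rpow_re_of_pos hs.1 γ).trans_le (Real.rpow_le_one hs.1.le hs.2 hγ)

theorem intervalIntegrable_cpow_mul (hγ : -1 < γ.re) (hφ : ContinuousOn φ (ball 0 R))
    (hz : z ∈ ball 0 R) :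
    IntervalIntegrable (fun s : ℝ => (s : ℂ) ^ γ * φ (s * z)) volume 0 1 := by
  refine (intervalIntegral.intervalIntegrable_cpow' hγ).mul_continuousOn ?_
  rw [Set.uIcc_of_le zero_le_one]
  exact hφ.comp (by fun_prop) fun s hs => ofReal_mul_mem_ball hs hz

theorem hasDerivAt_radialMean (hγ : -1 < γ.re) (hφ : DifferentiableOn ℂ φ (ball 0 R))
    (hz : z ∈ ball 0 R) : HasDerivAt (radialMean γ φ) (radialMean (γ + 1) (deriv φ) z) z := by
  obtain ⟨r, hzr, hrR⟩ := exists_between (mem_ball_zero_iff.mp hz)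
  have hsub : closedBall (0 : ℂ) r ⊆ ball 0 R := closedBall_subset_ball hrR
  have hφ' : DifferentiableOn ℂ (deriv φ) (ball 0 R) := hφ.deriv isOpen_ball
  have hγ' : 0 < (γ + 1).re := by simpa using neg_lt_iff_pos_add.mp hγ
  obtain ⟨C, hC⟩ := (isCompact_closedBall (0 : ℂ) r).exists_bound_of_continuousOn
    (hφ'.continuousOn.mono hsub)
  have hball : ball (0 : ℂ) r ∈ nhds z := isOpen_ball.mem_nhds (by simpa using hzr)
  have hint : ∀ x ∈ ball 0 R,
      IntervalIntegrable (fun s : ℝ => (s : ℂ) ^ γ * φ (s * x)) volume 0 1 :=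
    fun x hx => intervalIntegrable_cpow_mul hγ hφ.continuousOn hx
  refine (intervalIntegral.hasDerivAt_integral_of_dominated_loc_of_deriv_le (bound := fun _ => C)
    (F' := fun x (s : ℝ) => (s : ℂ) ^ (γ + 1) * deriv φ (s * x)) hball ?_ (hint z hz)
    (intervalIntegrable_cpow_mul (by linarith) hφ'.continuousOn hz).def'.aestronglyMeasurable
    (.of_forall fun s hs x hx => ?_) intervalIntegrable_const (.of_forall fun s hs x hx => ?_)).2
  · filter_upwards [hball] with x hx
    exact (hint x (hsub (ball_subset_closedBall hx))).def'.aestronglyMeasurable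
  · rw [Set.uIoc_of_le zero_le_one] at hs
    have hmem := ofReal_mul_mem_ball (Set.Ioc_subset_Icc_self hs) hx
    calc ‖(s : ℂ) ^ (γ + 1) * deriv φ (s * x)‖
        = ‖(s : ℂ) ^ (γ + 1)‖ * ‖deriv φ (s * x)‖ := norm_mul _ _
      _ ≤ 1 * C := by
        gcongr
        · exact norm_ofReal_cpow_le_one hs hγ'.le
        · exact hC _ (ball_subset_closedBall hmem)
      _ = C := one_mul C
  · rw [Set.uIoc_of_le zero_le_one] at hs
    have hmem : (s : ℂ) * x ∈ ball 0 R :=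
      hsub (ball_subset_closedBall (ofReal_mul_mem_ball (Set.Ioc_subset_Icc_self hs) hx))
    have hφd := (hφ.differentiableAt (isOpen_ball.mem_nhds hmem)).hasDerivAt
    refine ((hφd.comp x (hasDerivAt_const_mul (s : ℂ))).const_mul ((s : ℂ) ^ γ)).congr_deriv ?_
    rw [cpow_add _ _ (ofReal_ne_zero.mpr hs.1.ne'), cpow_one]
    ring

theorem differentiableOn_radialMean (hγ : -1 < γ.re) (hφ : DifferentiableOn ℂ φ (ball 0 R)) :
    DifferentiableOn ℂ (radialMean γ φ) (ball 0 R) := fun _ hz =>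
  (hasDerivAt_radialMean hγ hφ hz).differentiableAt.differentiableWithinAt

theorem mul_deriv_radialMean_add (hγ : -1 < γ.re) (hφ : DifferentiableOn ℂ φ (ball 0 R))
    (hz : z ∈ ball 0 R) :
    z * deriv (radialMean γ φ) z + (γ + 1) * radialMean γ φ z = φ z := by
  have hφ' : DifferentiableOn ℂ (deriv φ) (ball 0 R) := hφ.deriv isOpen_ball
  have hγ' : 0 < (γ + 1).re := by simpa using neg_lt_iff_pos_add.mp hγ
  have hcont : ContinuousOn (fun s : ℝ => (s : ℂ) ^ (γ + 1) * φ (s * z)) (Set.Icc 0 1) :=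
    (continuous_ofReal_cpow_const hγ').continuousOn.mul
      (hφ.continuousOn.comp (by fun_prop) fun s hs => ofReal_mul_mem_ball hs hz)
  have hderiv : ∀ s ∈ Set.Ioo (0 : ℝ) 1,
      HasDerivAt (fun s : ℝ => (s : ℂ) ^ (γ + 1) * φ (s * z))
        (z * ((s : ℂ) ^ (γ + 1) * deriv φ (s * z)) + (γ + 1) * ((s : ℂ) ^ γ * φ (s * z))) s := by
    intro s hs
    have hmem := ofReal_mul_mem_ball (Set.Ioo_subset_Icc_self hs) hz
    have hφd := (hφ.differentiableAt (isOpen_ball.mem_nhds hmem)).hasDerivAt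
    have hpow := hasDerivAt_ofReal_cpow_const hs.1.ne' (r := γ + 1) (ne_zero_of_re_pos hγ')
    have hφs := (HasDerivAt.comp (s : ℂ) hφd (hasDerivAt_mul_const z)).comp_ofReal
    refine (hpow.mul hφs).congr_deriv ?_
    rw [add_sub_cancel_right]
    simp only [Function.comp_apply]
    ring
  have hint := (intervalIntegrable_cpow_mul hγ hφ.continuousOn hz).const_mul (γ + 1)
  have hint' := (intervalIntegrable_cpow_mul (γ := γ + 1) (by linarith)
    hφ'.continuousOn hz).const_mul z
  have ftc := intervalIntegral.integral_eq_sub_of_hasDerivAt_of_le zero_le_one hcont hderiv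
    (hint'.add hint)
  rw [intervalIntegral.integral_add hint' hint, intervalIntegral.integral_const_mul,
    intervalIntegral.integral_const_mul, ofReal_zero, zero_cpow (ne_zero_of_re_pos hγ')] at ftc
  rw [(hasDerivAt_radialMean hγ hφ hz).deriv]
  simpa [radialMean] using ftc

theorem mul_dslope_zero (hf0 : f 0 = 0) (z : ℂ) : z * dslope f 0 z = f z := by
  simpa [hf0] using sub_smul_dslope f 0 z

theorem deriv_eq_dslope_zero_add (hf : DifferentiableOn ℂ f (ball 0 R)) (hf0 : f 0 = 0)
    (hz : z ∈ ball 0 R) : deriv f z = dslope f 0 z + z * deriv (dslope f 0) z := by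
  have hd : DifferentiableAt ℂ (dslope f 0) z :=
    ((differentiableOn_dslope (ball_mem_nhds 0 (pos_of_mem_ball hz))).mpr hf).differentiableAt
      (isOpen_ball.mem_nhds hz)
  have hfactor : id * dslope f 0 = f := funext (mul_dslope_zero hf0)
  simpa [hfactor] using ((hasDerivAt_id z).mul hd.hasDerivAt).deriv

theorem hasDerivAt_mul_radialMean_dslope (hγ : -1 < γ.re) (hf : DifferentiableOn ℂ f (ball 0 R))
    (hf0 : f 0 = 0) (hz : z ∈ ball 0 R) :
    HasDerivAt (fun z => z * radialMean γ (dslope f 0) z) (radialMean γ (deriv f) z) z := by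
  have hd : DifferentiableOn ℂ (dslope f 0) (ball 0 R) :=
    (differentiableOn_dslope (ball_mem_nhds 0 (pos_of_mem_ball hz))).mpr hf
  have hint := intervalIntegrable_cpow_mul hγ hd.continuousOn hz
  have hint' := (intervalIntegrable_cpow_mul (γ := γ + 1) (by simp; linarith)
    (hd.deriv isOpen_ball).continuousOn hz).const_mul z
  refine ((hasDerivAt_id z).mul (hasDerivAt_radialMean hγ hd hz)).congr_deriv ?_
  rw [one_mul, id_eq, radialMean, radialMean, ← intervalIntegral.integral_const_mul,
    ← intervalIntegral.integral_add hint hint', radialMean]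
  refine intervalIntegral.integral_congr_uIoo fun s hs => ?_
  rw [Set.uIoo_of_le zero_le_one] at hs
  rw [deriv_eq_dslope_zero_add hf hf0 (ofReal_mul_mem_ball (Set.Ioo_subset_Icc_self hs) hz),
    cpow_add _ _ (ofReal_ne_zero.mpr hs.1.ne'), cpow_one]
  ring

end RadialMean

section BernardiTransform

open Metric

/-- The Bernardi integral transform `(1 + γ) z ^ (-γ) ∫₀ᶻ t ^ (γ - 1) f(t) dt`, the integral being
parametrized by `t = s z` along the segment from `0` to `z`. The value at `0` is the limit `0` and
powers are principal. -/
def bernardi (γ : ℂ) (f : ℂ → ℂ) (z : ℂ) : ℂ :=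
  if z = 0 then 0 else
    ((1 + γ) / z ^ γ) * (z * ∫ s in (0 : ℝ)..1, ((s : ℂ) * z) ^ (γ - 1) * f ((s : ℂ) * z))

variable {γ : ℂ} {f : ℂ → ℂ} {R : ℝ} {z : ℂ}

theorem ofReal_mul_cpow {s : ℝ} (hs : 0 < s) (hz : z ≠ 0) :
    ((s : ℂ) * z) ^ γ = (s : ℂ) ^ γ * z ^ γ := by
  have hs0 : (s : ℂ) ≠ 0 := ofReal_ne_zero.mpr hs.ne'
  rw [cpow_def_of_ne_zero (mul_ne_zero hs0 hz), cpow_def_of_ne_zero hs0, cpow_def_of_ne_zero hz,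
    log_ofReal_mul hs hz, ofReal_log hs.le, add_mul, exp_add]

theorem bernardi_eq_mul_radialMean (hf0 : f 0 = 0) :
    bernardi γ f = fun z => (1 + γ) * (z * radialMean γ (dslope f 0) z) := by
  funext z
  rcases eq_or_ne z 0 with rfl | hz
  · simp [bernardi]
  have hint : ∫ s in (0 : ℝ)..1, ((s : ℂ) * z) ^ (γ - 1) * f ((s : ℂ) * z) =
      z ^ γ * radialMean γ (dslope f 0) z := by
    rw [radialMean, ← intervalIntegral.integral_const_mul]
    refine intervalIntegral.integral_congr_uIoo fun s hs => ?_
    rw [Set.uIoo_of_le zero_le_one] at hs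
    have hs0 : (s : ℂ) ≠ 0 := ofReal_ne_zero.mpr hs.1.ne'
    rw [ofReal_mul_cpow hs.1 hz, cpow_sub _ _ hs0, cpow_sub _ _ hz, cpow_one, cpow_one,
      ← mul_dslope_zero hf0 (s * z)]
    field_simp
  have hpow : z ^ γ ≠ 0 := by simp [cpow_eq_zero_iff, hz]
  rw [bernardi, if_neg hz, hint]
  field_simp

theorem bernardi_zero (γ : ℂ) (f : ℂ → ℂ) : bernardi γ f 0 = 0 := if_pos rfl

theorem hasDerivAt_bernardi (hγ : -1 < γ.re) (hf : DifferentiableOn ℂ f (ball 0 R))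
    (hf0 : f 0 = 0) (hz : z ∈ ball 0 R) :
    HasDerivAt (bernardi γ f) ((1 + γ) * radialMean γ (deriv f) z) z := by
  rw [bernardi_eq_mul_radialMean hf0]
  exact (hasDerivAt_mul_radialMean_dslope hγ hf hf0 hz).const_mul _

theorem differentiableOn_bernardi (hγ : -1 < γ.re) (hf : DifferentiableOn ℂ f (ball 0 R))
    (hf0 : f 0 = 0) : DifferentiableOn ℂ (bernardi γ f) (ball 0 R) := fun _ hz =>
  (hasDerivAt_bernardi hγ hf hf0 hz).differentiableAt.differentiableWithinAt

theorem Normalized.bernardi (hγ : -1 < γ.re) (hf : DifferentiableOn ℂ f unitDisk)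
    (hn : Normalized f) : Normalized (bernardi γ f) := by
  have h0 : (0 : ℂ) ∈ unitDisk := mem_ball_self one_pos
  have hmean := mul_deriv_radialMean_add hγ (hf.deriv isOpen_ball) h0
  rw [zero_mul, zero_add, hn.2, add_comm] at hmean
  exact ⟨bernardi_zero γ f, (hasDerivAt_bernardi hγ hf hn.1 h0).deriv.trans hmean⟩

end BernardiTransform

section Libera

open Metric

theorem re_radialMean_div_self_pos {γ : ℂ} {χ : ℂ → ℂ} {R : ℝ} (hγ : 0 ≤ γ.re)
    (hχ : DifferentiableOn ℂ χ (ball 0 R)) (hne : ∀ z ∈ ball 0 R, χ z ≠ 0)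
    (hpos : ∀ z ∈ ball 0 R, 0 < (1 + z * logDeriv χ z).re) :
    ∀ z ∈ ball 0 R, 0 < (radialMean γ χ z / χ z).re := by
  have hγ' : -1 < γ.re := by linarith
  have hJ := differentiableOn_radialMean hγ' hχ
  have hode : ∀ z ∈ ball 0 R, z * deriv (fun z => radialMean γ χ z / χ z) z +
      (γ + (1 + z * logDeriv χ z)) * (radialMean γ χ z / χ z) = 1 := by
    intro z hz
    have hmem := isOpen_ball.mem_nhds hz
    have hχz := hne z hz
    rw [deriv_fun_div (hJ.differentiableAt hmem) (hχ.differentiableAt hmem) hχz, logDeriv_apply]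
    field_simp
    linear_combination χ z * mul_deriv_radialMean_add hγ' hχ hz
  exact fun z hz => (by positivity : (0 : ℝ) ≤ γ.re * ‖radialMean γ χ z / χ z‖ ^ 2).trans_lt
    (mul_sq_norm_lt_re_of_mul_deriv_add_eq_one hγ (hJ.div hχ hne) hpos hode z hz)

theorem re_radialMean_div_radialMean_pos {γ : ℂ} {M N : ℂ → ℂ} {R : ℝ} (hγ : -1 < γ.re)
    (hM : DifferentiableOn ℂ M (ball 0 R)) (hN : DifferentiableOn ℂ N (ball 0 R))
    (hmean : ∀ z ∈ ball 0 R, 0 < (radialMean γ N z / N z).re)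
    (hpos : ∀ z ∈ ball 0 R, 0 < (M z / N z).re) :
    ∀ z ∈ ball 0 R, 0 < (radialMean γ M z / radialMean γ N z).re := by
  have hne : ∀ z ∈ ball 0 R, radialMean γ N z ≠ 0 := fun z hz h => by
    simpa [h] using hmean z hz
  have hJM := differentiableOn_radialMean hγ hM
  have hJN := differentiableOn_radialMean hγ hN
  refine re_pos_of_re_add_mul_deriv_pos (hJM.div hJN hne) (fun z hz => (hmean z hz).le)
    fun z hz => ?_
  have hmem := isOpen_ball.mem_nhds hz
  have hNz : N z ≠ 0 := fun h => by simpa [h] using hpos z hz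
  have hJNz := hne z hz
  convert hpos z hz using 2
  rw [deriv_fun_div (hJM.differentiableAt hmem) (hJN.differentiableAt hmem) hJNz]
  field_simp
  linear_combination radialMean γ N z * mul_deriv_radialMean_add hγ hM hz -
    radialMean γ M z * mul_deriv_radialMean_add hγ hN hz

theorem re_deriv_div_dslope_pos {f g : ℂ → ℂ} (hf1 : deriv f 0 = 1) (hg : Normalized g)
    (hpos : ∀ z ∈ unitDisk, z ≠ 0 → 0 < (z * deriv f z / g z).re) :
    ∀ z ∈ unitDisk, 0 < (deriv f z / dslope g 0 z).re := by
  intro z hz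
  rcases eq_or_ne z 0 with rfl | hz0
  · simp [hf1, hg.2]
  · simpa only [← mul_dslope_zero hg.1 z, mul_div_mul_left _ _ hz0] using hpos z hz hz0

theorem Starlike.dslope_ne_zero {g : ℂ → ℂ} (hs : Starlike g) (hg : Normalized g) :
    ∀ z ∈ unitDisk, dslope g 0 z ≠ 0 := fun z hz h => by
  simpa [h] using re_deriv_div_dslope_pos hg.2 hg hs z hz

theorem Starlike.re_one_add_mul_logDeriv_dslope_pos {g : ℂ → ℂ} (hs : Starlike g)
    (hn : Normalized g) (hg : DifferentiableOn ℂ g unitDisk) :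
    ∀ z ∈ unitDisk, 0 < (1 + z * logDeriv (dslope g 0) z).re := by
  intro z hz
  convert re_deriv_div_dslope_pos hn.2 hn hs z hz using 2
  rw [deriv_eq_dslope_zero_add hg hn.1 hz, logDeriv_apply, add_div,
    div_self (hs.dslope_ne_zero hn z hz), mul_div_assoc]

theorem re_mul_deriv_bernardi_div_bernardi_pos {γ : ℂ} {f g : ℂ → ℂ} (hγ : 0 ≤ γ.re)
    (hf : DifferentiableOn ℂ f unitDisk) (hfn : Normalized f)
    (hg : DifferentiableOn ℂ g unitDisk) (hgn : Normalized g) (hs : Starlike g)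
    (hpos : ∀ z ∈ unitDisk, z ≠ 0 → 0 < (z * deriv f z / g z).re) :
    ∀ z ∈ unitDisk, z ≠ 0 → 0 < (z * deriv (bernardi γ f) z / bernardi γ g z).re := by
  intro z hz hz0
  have hγ' : -1 < γ.re := by linarith
  have hχ : DifferentiableOn ℂ (dslope g 0) unitDisk :=
    (differentiableOn_dslope (ball_mem_nhds 0 one_pos)).mpr hg
  have hmean := re_radialMean_div_self_pos hγ hχ (hs.dslope_ne_zero hgn)
    (hs.re_one_add_mul_logDeriv_dslope_pos hgn hg)
  have hγ1 : (1 + γ) ≠ 0 := ne_zero_of_re_pos (by simp; linarith)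
  rw [(hasDerivAt_bernardi hγ' hf hfn.1 hz).deriv, bernardi_eq_mul_radialMean hgn.1,
    mul_left_comm, mul_div_mul_left _ _ hγ1, mul_div_mul_left _ _ hz0]
  exact re_radialMean_div_radialMean_pos hγ' (hf.deriv isOpen_ball) hχ hmean
    (re_deriv_div_dslope_pos hfn.2 hgn hpos) z hz

end Libera

section CloseToConvex

open Metric

theorem Starlike.ne_zero {g : ℂ → ℂ} (hs : Starlike g) {z : ℂ} (hz : z ∈ unitDisk) (hz0 : z ≠ 0) :
    g z ≠ 0 := fun h => by
  simpa [h] using hs z hz hz0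

theorem Starlike.exists_injOn_log_comp_exp {g : ℂ → ℂ} (hs : Starlike g) (hn : Normalized g)
    (hg : DifferentiableOn ℂ g unitDisk) :
    ∃ ℓ : ℂ → ℂ, Set.InjOn ℓ {s | s.re < 0} ∧ (∀ s, s.re < 0 → exp (ℓ s) = g (exp s)) ∧
      ∀ s, ∀ n : ℤ, ℓ (s + n * (2 * Real.pi * I)) = ℓ s + n * (2 * Real.pi * I) := by
  have hχ : DifferentiableOn ℂ (dslope g 0) unitDisk :=
    (differentiableOn_dslope (ball_mem_nhds 0 one_pos)).mpr hg
  obtain ⟨Φ, hΦ⟩ := exists_hasDerivAt_logDeriv_exp_eq hχ (hs.dslope_ne_zero hn)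
  have exp_mem : ∀ s : ℂ, s.re < 0 → exp s ∈ unitDisk := fun s hs => by
    simpa [unitDisk, norm_exp] using hs
  refine ⟨fun s => s + Φ (exp s), ?_, fun s hs => ?_, fun s n => ?_⟩
  · refine injOn_of_convex_of_hasDerivAt_re_pos (convex_halfSpace_re_lt 0)
      (fun s hs => (hasDerivAt_id s).add
        ((hΦ _ (exp_mem s hs)).1.comp s (hasDerivAt_exp s))) fun s hs' => ?_
    rw [mul_comm]
    exact hs.re_one_add_mul_logDeriv_dslope_pos hn hg _ (exp_mem s hs')
  · rw [exp_add, (hΦ _ (exp_mem s hs)).2, mul_dslope_zero hn.1]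
  · have hperiod : exp (s + n * (2 * Real.pi * I)) = exp s := exp_periodic.int_mul n s
    simp only [hperiod, add_right_comm]

theorem Starlike.injOn {g : ℂ → ℂ} (hs : Starlike g) (hn : Normalized g)
    (hg : DifferentiableOn ℂ g unitDisk) : Set.InjOn g unitDisk := by
  obtain ⟨ℓ, hinj, hexp, hperiod⟩ := hs.exists_injOn_log_comp_exp hn hg
  have log_re_neg : ∀ z ∈ unitDisk, z ≠ 0 → (log z).re < 0 := fun z hz hz0 => by
    rw [log_re]
    exact Real.log_neg (norm_pos_iff.mpr hz0) (mem_ball_zero_iff.mp hz)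
  intro a ha b hb hab
  rcases eq_or_ne a 0 with rfl | ha0
  · by_contra hb0
    exact hs.ne_zero hb (Ne.symm hb0) (hab ▸ hn.1)
  rcases eq_or_ne b 0 with rfl | hb0
  · exact absurd (hab.trans hn.1) (hs.ne_zero ha ha0)
  have hlift : exp (ℓ (log a)) = exp (ℓ (log b)) := by
    rw [hexp _ (log_re_neg a ha ha0), hexp _ (log_re_neg b hb hb0), exp_log ha0, exp_log hb0, hab]
  obtain ⟨n, hshift⟩ := exp_eq_exp_iff_exists_int.mp hlift
  have hlog : log a = log b + n * (2 * Real.pi * I) :=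
    hinj (log_re_neg a ha ha0) (by simpa using log_re_neg b hb hb0)
      (hshift.trans (hperiod (log b) n).symm)
  rw [← exp_log ha0, ← exp_log hb0]
  exact exp_eq_exp_iff_exists_int.mpr ⟨n, hlog⟩

theorem Starlike.bernardi {γ : ℂ} {g : ℂ → ℂ} (hγ : 0 ≤ γ.re) (hs : Starlike g)
    (hg : DifferentiableOn ℂ g unitDisk) (hn : Normalized g) : Starlike (bernardi γ g) :=
  re_mul_deriv_bernardi_div_bernardi_pos hγ hg hn hg hn hs hs

end CloseToConvex

theorem stmt3_general {γ : ℂ} (hγ : 0 ≤ γ.re) {f : ℂ → ℂ} (hf : CloseToConvex f) :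
    CloseToConvex (bernardi γ f) := by
  obtain ⟨hfa, hfn, g, hga, hgn, -, hs, hfg⟩ := hf
  have hγ' : -1 < γ.re := by linarith
  have analyticOn_bernardi {h : ℂ → ℂ} (ha : AnalyticOn ℂ h unitDisk) (hn : Normalized h) :
      AnalyticOn ℂ (bernardi γ h) unitDisk :=
    (differentiableOn_bernardi hγ' ha.differentiableOn hn.1).analyticOn Metric.isOpen_ball
  have hGn := hgn.bernardi hγ' hga.differentiableOn
  have hGs := hs.bernardi hγ hga.differentiableOn hgn
  have hGa := analyticOn_bernardi hga hgn
  exact ⟨analyticOn_bernardi hfa hfn, hfn.bernardi hγ' hfa.differentiableOn,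
    bernardi γ g, hGa, hGn, hGs.injOn hGn hGa.differentiableOn, hGs,
    re_mul_deriv_bernardi_div_bernardi_pos hγ hfa.differentiableOn hfn hga.differentiableOn hgn
      hs hfg⟩

theorem stmt3 (γ : ℝ) (hγ : 0 ≤ γ) (f : ℂ → ℂ) (hf : CloseToConvex f) :
    CloseToConvex (fun z => if z = 0 then 0 else
      ((1 + γ : ℂ) / z ^ (γ : ℂ)) *
        (z * ∫ s in (0:ℝ)..1, ((s : ℂ) * z) ^ ((γ : ℂ) - 1) * f ((s : ℂ) * z))) :=
  stmt3_general (by simpa using hγ) hf
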